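/- Marsden's identity for (p,q)-Bernstein bases: let n ≥ 1 and let p, q be reals with 0 < q < p. Then for all reals x and t, ∏_{i=1}^{n} (x − p^{n−i} q^{i−1} t) = Σ_{j=0}^{n} x^{n−j} ( ∏_{l=1}^{j} (x − p^{n−l} q^{l−1}) ) B_j^n(t;p,q), where the empty product (for j = 0) equals 1. -/

import Mathlib

/-- The (p,q)-integer `[n]_{p,q} = Σ_{j=0}^{n-1} p^{n-1-j} q^j`. -/
noncomputable def pqInt (p q : ℝ) (n : ℕ) : ℝ :=
  ∑ j ∈ Finset.range n, p ^ (n - 1 - j) * q ^ j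

/-- The (p,q)-factorial `[n]_{p,q}! = ∏_{j=1}^{n} [j]_{p,q}`. -/
noncomputable def pqFact (p q : ℝ) : ℕ → ℝ
  | 0 => 1
  | n + 1 => pqFact p q n * pqInt p q (n + 1)

/-- The (p,q)-binomial coefficient `[n choose k]_{p,q}`. -/
noncomputable def pqBinom (p q : ℝ) (n k : ℕ) : ℝ :=
  pqFact p q n / (pqFact p q k * pqFact p q (n - k))

/-- The (p,q)-Bernstein basis function
`B_k^n(t;p,q) = p^{k(k-1)/2 - n(n-1)/2} [n choose k]_{p,q} t^k ∏_{s=0}^{n-k-1} (p^s - q^s t)`. -/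
noncomputable def pqBernstein (p q : ℝ) (n k : ℕ) (t : ℝ) : ℝ :=
  p ^ (k * (k - 1) / 2) / p ^ (n * (n - 1) / 2) * pqBinom p q n k * t ^ k *
    ∏ s ∈ Finset.range (n - k), (p ^ s - q ^ s * t)

/-!
Write `(a ⊖ b)^n = ∏_{i<n} (p^i a - q^i b)`. Marsden's identity is the case `y = x`, `z = p^(n-1)`,
`w = p^(n-1) t` of the homogeneous (p,q)-Vandermonde identity
`z^n (y ⊖ w)^n = Σ_k [n choose k] y^(n-k) w^k (y ⊖ z)^k (z ⊖ w)^(n-k)`,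
which holds in every commutative ring and follows by induction from Pascal's rule and
`z (p^n y - q^n w) = p^k y (p^(n-k) z - q^(n-k) w) + q^(n-k) w (p^k y - q^k z)`.
-/

section CommSemiring

variable {R : Type*} [CommSemiring R]

/-- The (p,q)-binomial coefficient as a polynomial in `p` and `q`, defined by Pascal's rule. It
makes sense in every commutative semiring and vanishes for `k > n`, unlike the quotient of
factorials `pqBinom`, where the truncated `n - k` gives junk values. -/
def pqGaussBinom (p q : R) : ℕ → ℕ → R
  | _, 0 => 1
  | 0, _ + 1 => 0
  | n + 1, k + 1 => p ^ (k + 1) * pqGaussBinom p q n (k + 1) + q ^ (n - k) * pqGaussBinom p q n k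

@[simp]
lemma pqGaussBinom_zero_right (p q : R) (n : ℕ) : pqGaussBinom p q n 0 = 1 := by
  cases n <;> rfl

lemma pqGaussBinom_succ_succ (p q : R) (n k : ℕ) :
    pqGaussBinom p q (n + 1) (k + 1) =
      p ^ (k + 1) * pqGaussBinom p q n (k + 1) + q ^ (n - k) * pqGaussBinom p q n k :=
  rfl

lemma pqGaussBinom_eq_zero_of_lt (p q : R) {n k : ℕ} (h : n < k) : pqGaussBinom p q n k = 0 := by
  induction n generalizing k with
  | zero =>
    obtain ⟨k, rfl⟩ := Nat.exists_eq_add_one_of_ne_zero h.ne'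
    rfl
  | succ n ih =>
    obtain ⟨k, rfl⟩ := Nat.exists_eq_add_one_of_ne_zero (Nat.ne_zero_of_lt h)
    rw [pqGaussBinom_succ_succ, ih (by lia), ih (by lia), mul_zero, mul_zero, add_zero]

@[simp]
lemma pqGaussBinom_self (p q : R) (n : ℕ) : pqGaussBinom p q n n = 1 := by
  induction n with
  | zero => rfl
  | succ n ih =>
    simp [pqGaussBinom_succ_succ, pqGaussBinom_eq_zero_of_lt p q n.lt_succ_self, ih]

lemma sum_pqGaussBinom_succ_mul (p q : R) (n : ℕ) (f : ℕ → R) :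
    ∑ k ∈ Finset.range (n + 2), pqGaussBinom p q (n + 1) k * f k =
      ∑ k ∈ Finset.range (n + 1),
        pqGaussBinom p q n k * (p ^ k * f k + q ^ (n - k) * f (k + 1)) := by
  have hshift : ∑ k ∈ Finset.range (n + 1),
        p ^ (k + 1) * pqGaussBinom p q n (k + 1) * f (k + 1) + f 0 =
      ∑ k ∈ Finset.range (n + 1), p ^ k * pqGaussBinom p q n k * f k := by
    have h := Finset.sum_range_succ' (fun k ↦ p ^ k * pqGaussBinom p q n k * f k) (n + 1)
    rw [Finset.sum_range_succ, pqGaussBinom_eq_zero_of_lt p q n.lt_succ_self] at h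
    simpa using h.symm
  calc
    _ = (∑ k ∈ Finset.range (n + 1),
          p ^ (k + 1) * pqGaussBinom p q n (k + 1) * f (k + 1) + f 0) +
        ∑ k ∈ Finset.range (n + 1), q ^ (n - k) * pqGaussBinom p q n k * f (k + 1) := by
      rw [Finset.sum_range_succ', add_right_comm, ← Finset.sum_add_distrib]
      simp only [pqGaussBinom_succ_succ, pqGaussBinom_zero_right, one_mul, add_mul]
    _ = _ := by
      rw [hshift, ← Finset.sum_add_distrib]
      exact Finset.sum_congr rfl fun k _ ↦ by ring

end CommSemiring

section CommRing

variable {R : Type*} [CommRing R]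

/-- The (p,q)-power `(a ⊖ b)^n = ∏_{i=0}^{n-1} (p^i a - q^i b)`, the (p,q)-analogue of
`(a - b)^n`. -/
def pqSubPow (p q a b : R) (n : ℕ) : R :=
  ∏ i ∈ Finset.range n, (p ^ i * a - q ^ i * b)

@[simp]
lemma pqSubPow_zero (p q a b : R) : pqSubPow p q a b 0 = 1 :=
  Finset.prod_range_zero _

lemma pqSubPow_succ (p q a b : R) (n : ℕ) :
    pqSubPow p q a b (n + 1) = pqSubPow p q a b n * (p ^ n * a - q ^ n * b) :=
  Finset.prod_range_succ _ n

lemma pqSubPow_mul_mul (p q c a b : R) (n : ℕ) :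
    pqSubPow p q (c * a) (c * b) n = c ^ n * pqSubPow p q a b n := by
  simp only [pqSubPow, mul_left_comm _ c, ← mul_sub, Finset.prod_mul_distrib, Finset.prod_const,
    Finset.card_range]

lemma pqSubPow_pow_mul (p q a b : R) {m n : ℕ} (h : n ≤ m + 1) :
    pqSubPow p q a (p ^ m * b) n =
      p ^ (n * (n - 1) / 2) * ∏ i ∈ Finset.range n, (a - p ^ (m - i) * q ^ i * b) := by
  rw [← Finset.sum_range_id, ← Finset.prod_pow_eq_pow_sum, ← Finset.prod_mul_distrib]
  refine Finset.prod_congr rfl fun i hi ↦ ?_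
  have him : i ≤ m := by have := Finset.mem_range.mp hi; lia
  rw [← pow_mul_pow_sub p him]
  ring

theorem pow_mul_pqSubPow_eq_sum (p q y z w : R) (n : ℕ) :
    z ^ n * pqSubPow p q y w n =
      ∑ k ∈ Finset.range (n + 1), pqGaussBinom p q n k *
        (y ^ (n - k) * w ^ k * pqSubPow p q y z k * pqSubPow p q z w (n - k)) := by
  induction n with
  | zero => simp
  | succ n ih =>
    rw [sum_pqGaussBinom_succ_mul, pqSubPow_succ, pow_succ, mul_mul_mul_comm, ih, Finset.sum_mul]
    refine Finset.sum_congr rfl fun k hk ↦ ?_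
    obtain ⟨m, rfl⟩ := Nat.exists_eq_add_of_le (Finset.mem_range_succ_iff.mp hk)
    have hfactor : (p ^ (k + m) * y - q ^ (k + m) * w) * z =
        p ^ k * y * (p ^ m * z - q ^ m * w) + q ^ m * w * (p ^ k * y - q ^ k * z) := by ring
    rw [Nat.add_sub_add_right, add_assoc, Nat.add_sub_cancel_left, Nat.add_sub_cancel_left,
      pqSubPow_succ, pqSubPow_succ]
    linear_combination pqGaussBinom p q (k + m) k * y ^ m * w ^ k * pqSubPow p q y z k *
      pqSubPow p q z w m * hfactor

end CommRing

lemma pqInt_add (p q : ℝ) (a b : ℕ) :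
    pqInt p q (a + b) = p ^ b * pqInt p q a + q ^ a * pqInt p q b := by
  simp only [pqInt, Finset.sum_range_add, Finset.mul_sum]
  congr 1 <;> refine Finset.sum_congr rfl fun j hj ↦ ?_
  · have hexp : a + b - 1 - j = b + (a - 1 - j) := by have := Finset.mem_range.mp hj; lia
    rw [hexp, pow_add, mul_assoc]
  · have hexp : a + b - 1 - (a + j) = b - 1 - j := by lia
    rw [hexp, pow_add, mul_left_comm]

lemma pqInt_succ_pos {p q : ℝ} (hp : 0 < p) (hq : 0 < q) (n : ℕ) : 0 < pqInt p q (n + 1) :=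
  Finset.sum_pos (fun _ _ ↦ by positivity) (by simp)

lemma pqFact_succ (p q : ℝ) (n : ℕ) : pqFact p q (n + 1) = pqFact p q n * pqInt p q (n + 1) :=
  rfl

lemma pqFact_pos {p q : ℝ} (hp : 0 < p) (hq : 0 < q) (n : ℕ) : 0 < pqFact p q n := by
  induction n with
  | zero => exact one_pos
  | succ n ih => exact mul_pos ih (pqInt_succ_pos hp hq n)

lemma pqGaussBinom_mul_pqFact_mul_pqFact (p q : ℝ) (a b : ℕ) :
    pqGaussBinom p q (a + b) a * (pqFact p q a * pqFact p q b) = pqFact p q (a + b) := by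
  induction a generalizing b with
  | zero => simp [pqFact]
  | succ a iha =>
    induction b with
    | zero => simp [pqFact]
    | succ b ihb =>
      have hint : pqInt p q (a + 1 + b + 1) =
          p ^ (a + 1) * pqInt p q (b + 1) + q ^ (b + 1) * pqInt p q (a + 1) := by
        rw [add_assoc (a + 1), add_comm (a + 1), pqInt_add]
      have iha' := iha (b + 1)
      have hexp : a + 1 + b - a = b + 1 := by lia
      rw [← add_assoc, add_right_comm a b 1] at iha'
      rw [pqFact_succ] at iha' ihb
      rw [← add_assoc, pqGaussBinom_succ_succ, hexp, pqFact_succ p q (a + 1 + b), hint,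
        pqFact_succ, pqFact_succ]
      linear_combination
        p ^ (a + 1) * pqInt p q (b + 1) * ihb + q ^ (b + 1) * pqInt p q (a + 1) * iha'

lemma pqBinom_eq_pqGaussBinom {p q : ℝ} {n k : ℕ} (hk : k ≤ n) (hfact : pqFact p q n ≠ 0) :
    pqBinom p q n k = pqGaussBinom p q n k := by
  have h := pqGaussBinom_mul_pqFact_mul_pqFact p q k (n - k)
  rw [Nat.add_sub_cancel' hk] at h
  exact (eq_div_of_mul_eq (right_ne_zero_of_mul (h.trans_ne hfact)) h).symm

lemma pow_mul_pqBernstein {p q : ℝ} {n k : ℕ} (hk : k ≤ n) (hp : p ≠ 0)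
    (hfact : pqFact p q n ≠ 0) (t : ℝ) :
    p ^ (n * (n - 1) / 2) * pqBernstein p q n k t =
      p ^ (k * (k - 1) / 2) * pqGaussBinom p q n k * t ^ k * pqSubPow p q 1 t (n - k) := by
  simp only [pqBernstein, pqBinom_eq_pqGaussBinom hk hfact, pqSubPow, mul_one, ← mul_assoc,
    mul_div_cancel₀ _ (pow_ne_zero _ hp)]

theorem pq_marsden_identity_general (n : ℕ) (p q : ℝ) (hp : p ≠ 0) (hfact : pqFact p q n ≠ 0)
    (x t : ℝ) :
    ∏ i ∈ Finset.range n, (x - p ^ (n - 1 - i) * q ^ i * t) =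
      ∑ j ∈ Finset.range (n + 1),
        x ^ (n - j) * (∏ l ∈ Finset.range j, (x - p ^ (n - 1 - l) * q ^ l)) *
          pqBernstein p q n j t := by
  set z := p ^ (n - 1)
  have hz : z ^ n * p ^ (n * (n - 1) / 2) ≠ 0 :=
    mul_ne_zero (pow_ne_zero _ (pow_ne_zero _ hp)) (pow_ne_zero _ hp)
  have hprod (j : ℕ) (hj : j ≤ n) : pqSubPow p q x z j =
      p ^ (j * (j - 1) / 2) * ∏ l ∈ Finset.range j, (x - p ^ (n - 1 - l) * q ^ l) := by
    simpa using pqSubPow_pow_mul p q x 1 (show j ≤ n - 1 + 1 by lia)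
  have hscale (k : ℕ) : pqSubPow p q z (z * t) k = z ^ k * pqSubPow p q 1 t k := by
    simpa using pqSubPow_mul_mul p q z 1 t k
  refine mul_left_cancel₀ hz ?_
  rw [mul_assoc, ← pqSubPow_pow_mul p q x t (by lia), pow_mul_pqSubPow_eq_sum, Finset.mul_sum]
  refine Finset.sum_congr rfl fun j hj ↦ ?_
  have hjn : j ≤ n := Finset.mem_range_succ_iff.mp hj
  have hB := (pow_mul_pqBernstein hjn hp hfact t).symm
  rw [hprod j hjn, hscale, mul_pow, ← pow_mul_pow_sub z hjn]
  linear_combination z ^ j * z ^ (n - j) * x ^ (n - j) *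
    (∏ l ∈ Finset.range j, (x - p ^ (n - 1 - l) * q ^ l)) * hB

/-- Marsden's identity for (p,q)-Bernstein bases:
`∏_{i=1}^{n} (x - p^{n-i} q^{i-1} t)
  = Σ_{j=0}^{n} x^{n-j} (∏_{l=1}^{j} (x - p^{n-l} q^{l-1})) B_j^n(t;p,q)`. -/
theorem pq_marsden_identity (n : ℕ) (hn : 1 ≤ n) (p q : ℝ) (h0 : 0 < q) (hqp : q < p)
    (x t : ℝ) :
    ∏ i ∈ Finset.range n, (x - p ^ (n - 1 - i) * q ^ i * t) =
      ∑ j ∈ Finset.range (n + 1),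
        x ^ (n - j) * (∏ l ∈ Finset.range j, (x - p ^ (n - 1 - l) * q ^ l)) *
          pqBernstein p q n j t :=
  pq_marsden_identity_general n p q (h0.trans hqp).ne' (pqFact_pos (h0.trans hqp) h0 n).ne' x t
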